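/- Let n ≥ 1, p = 1 + 2/n, and α > n/2. If φ is a locally integrable function on ℝ^n with |||φ|||_{1,α;1} < ∞, then there exists T > 0 and a solution u of the semilinear heat equation ∂_t u − Δu = |u|^{p−1}u on ℝ^n × (0,T) with initial data φ (in the Duhamel integral sense), such that sup_{t∈(0,T)} |||u(t)|||_{1,n/2;T^{1/2}} < ∞ and sup_{t∈(0,T)} t^{n/2} [log(e+1/t)]^{n/2} ‖u(t)‖_{L^∞} < ∞. -/

import Mathlib

open MeasureTheory Real Set ENNReal

noncomputable def logFac (s : ℝ) : ℝ := Real.log (Real.exp 1 + 1 / s)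

noncomputable def zygNorm (n : ℕ) (q α : ℝ)
    (f : EuclideanSpace ℝ (Fin n) → ℝ) : ℝ≥0∞ :=
  ⨆ s : Set.Ioi (0 : ℝ),
    (ENNReal.ofReal (logFac s.1) ^ α *
      ⨆ E : {E : Set (EuclideanSpace ℝ (Fin n)) //
          MeasurableSet E ∧ volume E = ENNReal.ofReal s.1},
        ∫⁻ x in E.1, ENNReal.ofReal (|f x| ^ q)) ^ (1 / q)

noncomputable def zygNormUL (n : ℕ) (q α ρ : ℝ)
    (f : EuclideanSpace ℝ (Fin n) → ℝ) : ℝ≥0∞ :=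
  ⨆ z : EuclideanSpace ℝ (Fin n),
    zygNorm n q α ((Metric.ball z ρ).indicator f)

noncomputable def heatKernel (n : ℕ) (x : EuclideanSpace ℝ (Fin n)) (t : ℝ) : ℝ :=
  (4 * Real.pi * t) ^ (-(n : ℝ) / 2) * Real.exp (-‖x‖ ^ 2 / (4 * t))

/-- `u` is a solution of `∂ₜu − Δu = |u|^{p−1}u` on `ℝ^n × (0,T)` with initial data `φ`,
in the Duhamel integral sense. -/
def IsSolution (n : ℕ) (p T : ℝ) (φ : EuclideanSpace ℝ (Fin n) → ℝ)
    (u : EuclideanSpace ℝ (Fin n) → ℝ → ℝ) : Prop :=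
  Measurable (fun q : EuclideanSpace ℝ (Fin n) × ℝ => u q.1 q.2) ∧
  ∀ᵐ q : EuclideanSpace ℝ (Fin n) × ℝ
      ∂(volume.prod (volume.restrict (Set.Ioo 0 T))),
    Integrable (fun y => heatKernel n (q.1 - y) q.2 * φ y) volume ∧
    Integrable (fun ys : EuclideanSpace ℝ (Fin n) × ℝ =>
        heatKernel n (q.1 - ys.1) (q.2 - ys.2) * (|u ys.1 ys.2| ^ (p - 1) * u ys.1 ys.2))
      (volume.prod (volume.restrict (Set.Ioo 0 q.2))) ∧
    u q.1 q.2 = (∫ y, heatKernel n (q.1 - y) q.2 * φ y) +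
      ∫ s in Set.Ioo 0 q.2, ∫ y,
        heatKernel n (q.1 - y) (q.2 - s) * (|u y s| ^ (p - 1) * u y s)

/-!
Averaging the heat kernel over balls of radius `√t` turns the norm of the data into the pointwise
decay `S(t)|φ| ≲ t^{-n/2} log(e + 1/t)^{-α}`. On functions with `|u| ≤ 2 S(t)|φ|` the nonlinearity
is then at most a multiple of `t⁻¹ log(e + 1/t)^{-α(p-1)} S(t)|φ|`. As `S(t-s)S(s)|φ| = S(t)|φ|`,
the Duhamel map is a contraction in the weight `S(t)|φ|` as soon as the integral of
`t⁻¹ log(e + 1/t)^{-α(p-1)}` over `(0, T)` is small, which a small `T` achieves since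
`α(p-1) > 1`. The bounds on the solution are those on `S(t)|φ|`: the norm bound holds because
`S(t)|φ|` is an average of translates of `|φ|`.
-/

section Gaussian

variable {V : Type*} [NormedAddCommGroup V] [InnerProductSpace ℝ V]

theorem neg_sq_norm_div_add_neg_sq_norm_div (y z : V) {a b : ℝ} (ha : 0 < a) (hb : 0 < b) :
    -‖y‖ ^ 2 / (4 * a) + -‖z - y‖ ^ 2 / (4 * b) =
      -‖z‖ ^ 2 / (4 * (a + b)) + -((a + b) / (4 * a * b)) * ‖y - (a / (a + b)) • z‖ ^ 2 := by
  simp only [norm_sub_sq_real, norm_smul, inner_smul_right, mul_pow, Real.norm_eq_abs, sq_abs,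
    real_inner_comm y z]
  field_simp
  ring

theorem lintegral_exp_neg_mul_sq_norm_sub [FiniteDimensional ℝ V] [MeasurableSpace V]
    [BorelSpace V] {b : ℝ} (hb : 0 < b) (m : V) :
    ∫⁻ y, ENNReal.ofReal (rexp (-b * ‖y - m‖ ^ 2)) =
      ENNReal.ofReal ((π / b) ^ (Module.finrank ℝ V / 2 : ℝ)) := by
  have hval := GaussianFourier.integral_rexp_neg_mul_sq_norm (V := V) hb
  have hint : Integrable fun y : V => rexp (-b * ‖y‖ ^ 2) :=
    not_imp_comm.mp integral_undef (hval ▸ (by positivity))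
  rw [lintegral_sub_right_eq_self (fun y : V => ENNReal.ofReal (rexp (-b * ‖y‖ ^ 2))) m, ← hval,
    ofReal_integral_eq_lintegral_ofReal hint (ae_of_all _ fun _ => (exp_pos _).le)]

end Gaussian

section Lintegral

theorem lintegral_mul_setLIntegral_ball_comm {X : Type*} [PseudoMetricSpace X]
    [SecondCountableTopology X] [MeasurableSpace X] [OpensMeasurableSpace X] {μ : Measure X}
    [SFinite μ] {f g : X → ℝ≥0∞} (hf : AEMeasurable f μ) (hg : AEMeasurable g μ) (r : ℝ) :
    ∫⁻ x, f x * ∫⁻ y in Metric.ball x r, g y ∂μ ∂μ =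
      ∫⁻ y, g y * ∫⁻ x in Metric.ball y r, f x ∂μ ∂μ := by
  have hS : MeasurableSet {q : X × X | dist q.1 q.2 < r} :=
    measurableSet_lt measurable_dist measurable_const
  have hind {f g : X → ℝ≥0∞} (hg : AEMeasurable g μ) (x : X) :
      f x * ∫⁻ y in Metric.ball x r, g y ∂μ =
        ∫⁻ y, {q : X × X | dist q.1 q.2 < r}.indicator (fun q => f q.1 * g q.2) (x, y) ∂μ := by
    rw [← lintegral_const_mul'' _ hg.restrict, ← lintegral_indicator measurableSet_ball]
    congr with y
    simp only [Set.indicator, Metric.mem_ball, Set.mem_ofPred_eq, dist_comm]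
  simp only [hind hg, hind hf]
  rw [lintegral_lintegral_swap (f := fun x y =>
    {q : X × X | dist q.1 q.2 < r}.indicator (fun q => f q.1 * g q.2) (x, y))
    ((hf.comp_fst.mul hg.comp_snd).indicator hS)]
  congr! 4 with y x
  simp only [Set.indicator, Set.mem_ofPred_eq, dist_comm, mul_comm]

theorem setLIntegral_lconvolution_le {G : Type*} [AddGroup G] [MeasurableSpace G]
    [MeasurableAdd₂ G] [MeasurableNeg G] {μ : Measure G} [SFinite μ] [μ.IsAddLeftInvariant]
    {g f : G → ℝ≥0∞} (hg : AEMeasurable g μ) (hf : AEMeasurable f μ) (S : Set G) :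
    ∫⁻ x in S, (g ⋆ₗ[μ] f) x ∂μ ≤ (∫⁻ y, g y ∂μ) * ⨆ y, ∫⁻ x in S, f (-y + x) ∂μ := by
  have hf' (y : G) : AEMeasurable (fun x => f (-y + x)) μ :=
    hf.comp_quasiMeasurePreserving (measurePreserving_add_left μ (-y)).quasiMeasurePreserving
  simp only [lconvolution_def]
  rw [lintegral_lintegral_swap (AEMeasurable.mono_measure (by fun_prop)
    (Measure.prod_mono Measure.restrict_le_self le_rfl))]
  calc ∫⁻ y, ∫⁻ x in S, g y * f (-y + x) ∂μ ∂μ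
      = ∫⁻ y, g y * ∫⁻ x in S, f (-y + x) ∂μ ∂μ := by
        congr with y
        exact lintegral_const_mul'' _ (hf' y).restrict
    _ ≤ ∫⁻ y, g y * (⨆ z, ∫⁻ x in S, f (-z + x) ∂μ) ∂μ :=
        lintegral_mono fun y => by gcongr; exact le_iSup_of_le y le_rfl
    _ = (∫⁻ y, g y ∂μ) * ⨆ y, ∫⁻ x in S, f (-y + x) ∂μ := lintegral_mul_const'' _ hg

end Lintegral

section LogFactor

theorem one_le_logFac {s : ℝ} (hs : 0 ≤ s) : 1 ≤ logFac s := by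
  rw [logFac, le_log_iff_exp_le (by positivity)]
  exact le_add_of_nonneg_right (by positivity)

theorem logFac_anti {s t : ℝ} (hs : 0 < s) (hst : s ≤ t) : logFac t ≤ logFac s := by
  have ht : 0 < t := hs.trans_le hst
  unfold logFac
  gcongr

theorem logFac_sq_le {s : ℝ} (hs : 0 < s) : logFac (s ^ 2) ≤ 2 * logFac s := by
  have hexp : 1 ≤ rexp 1 := one_le_exp zero_le_one
  have hinv : 0 < 1 / s := by positivity
  calc logFac (s ^ 2) ≤ Real.log ((rexp 1 + 1 / s) ^ 2) :=
        Real.log_le_log (by positivity) (by rw [← one_div_pow]; nlinarith)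
    _ = 2 * logFac s := by rw [Real.log_pow, logFac, Nat.cast_ofNat]

theorem logFac_le_one_add_mul_logFac_mul {c s : ℝ} (hc : 0 < c) (hs : 0 < s) :
    logFac s ≤ (1 + c) * logFac (c * s) := by
  have hone : 1 ≤ logFac (c * s) := one_le_logFac (by positivity)
  calc logFac s ≤ Real.log ((1 + c) * (rexp 1 + 1 / (c * s))) := by
        refine Real.log_le_log (by positivity) ?_
        have : 1 / s = c * (1 / (c * s)) := by field_simp
        have : 0 < 1 / (c * s) := by positivity
        nlinarith [exp_pos 1]
    _ = Real.log (1 + c) + logFac (c * s) := Real.log_mul (by positivity) (by positivity)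
    _ ≤ c + logFac (c * s) := by
        gcongr
        linarith [Real.log_le_sub_one_of_pos (show 0 < 1 + c by positivity)]
    _ ≤ (1 + c) * logFac (c * s) := by nlinarith

theorem logFac_le_mul_logFac_mul_sqrt_pow {n : ℕ} (hn : n ≠ 0) {c t : ℝ} (hc : 0 < c) (ht : 0 < t)
    (ht1 : t ≤ 1) :
    logFac t ≤ 2 * (1 + c) * logFac (c * √t ^ n) := by
  have hr : 0 < √t := sqrt_pos.mpr ht
  calc logFac t = logFac (√t ^ 2) := by rw [sq_sqrt ht.le]
    _ ≤ 2 * logFac √t := logFac_sq_le hr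
    _ ≤ 2 * logFac (√t ^ n) := by
        gcongr
        exact logFac_anti (by positivity) (pow_le_of_le_one hr.le (sqrt_le_one.mpr ht1) hn)
    _ ≤ 2 * ((1 + c) * logFac (c * √t ^ n)) := by
        gcongr
        exact logFac_le_one_add_mul_logFac_mul hc (by positivity)
    _ = 2 * (1 + c) * logFac (c * √t ^ n) := by ring

theorem rpow_mul_logFac_rpow_le {n : ℕ} (hn : n ≠ 0) {α c t : ℝ} (hα : 0 ≤ α) (hc : 0 < c)
    (ht : 0 < t) (ht1 : t ≤ 1) :
    t ^ ((n : ℝ) / 2) * logFac t ^ α ≤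
      (2 * (1 + c)) ^ α / c * (logFac (c * √t ^ n) ^ α * (c * √t ^ n)) := by
  have hlogt : 0 ≤ logFac t := zero_le_one.trans (one_le_logFac ht.le)
  have hlog : 0 ≤ logFac (c * √t ^ n) := zero_le_one.trans (one_le_logFac (by positivity))
  calc t ^ ((n : ℝ) / 2) * logFac t ^ α
      ≤ √t ^ n * (2 * (1 + c) * logFac (c * √t ^ n)) ^ α := by
        rw [rpow_div_two_eq_sqrt _ ht.le, Real.rpow_natCast]
        gcongr
        exact logFac_le_mul_logFac_mul_sqrt_pow hn hc ht ht1
    _ = (2 * (1 + c)) ^ α / c * (logFac (c * √t ^ n) ^ α * (c * √t ^ n)) := by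
        rw [mul_rpow (by positivity) hlog]
        field_simp

/-- The substitution `x = -log s` turns this into the integrability of `x ^ (-β)` at infinity. -/
theorem integrableOn_inv_mul_neg_log_rpow {β : ℝ} (hβ : 1 < β) :
    IntegrableOn (fun s => s⁻¹ * (-Real.log s) ^ (-β)) (Ioo 0 (rexp (-1))) := by
  have hderiv : ∀ s ∈ Ioo 0 (rexp (-1)),
      HasDerivWithinAt (fun s => -Real.log s) (-s⁻¹) (Ioo 0 (rexp (-1))) s := fun s hs =>
    (hasDerivAt_log hs.1.ne').neg.hasDerivWithinAt
  have hinj : InjOn (fun s => -Real.log s) (Ioo 0 (rexp (-1))) := fun s hs t ht hst =>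
    Real.log_injOn_pos hs.1 ht.1 (neg_injective hst)
  have himage : (fun s => -Real.log s) '' Ioo 0 (rexp (-1)) ⊆ Ioi 1 := by
    rintro _ ⟨s, hs, rfl⟩
    exact lt_neg_of_lt_neg ((Real.log_lt_iff_lt_exp hs.1).mpr hs.2)
  have hrpow : IntegrableOn (fun x : ℝ => x ^ (-β)) (Ioi 1) :=
    integrableOn_Ioi_rpow_of_lt (by linarith) one_pos
  refine ((integrableOn_image_iff_integrableOn_abs_deriv_smul measurableSet_Ioo hderiv hinj _).mp
    (hrpow.mono_set himage)).congr_fun (fun s hs => ?_) measurableSet_Ioo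
  simp only [abs_neg, abs_of_pos (inv_pos.mpr hs.1), smul_eq_mul]

theorem tendsto_setLIntegral_Ioo_inv_mul_logFac_rpow {β : ℝ} (hβ : 1 < β) :
    Filter.Tendsto (fun T => ∫⁻ s in Ioo 0 T, ENNReal.ofReal (s⁻¹ * logFac s ^ (-β)))
      (nhdsWithin 0 (Ioi 0)) (nhds 0) := by
  set J := Ioo 0 (rexp (-1))
  have hle : ∀ s ∈ J, ENNReal.ofReal (s⁻¹ * logFac s ^ (-β)) ≤
      ENNReal.ofReal (s⁻¹ * (-Real.log s) ^ (-β)) := fun s hs => by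
    have hpos : 0 < -Real.log s :=
      neg_pos.mpr (Real.log_neg hs.1 (hs.2.trans (by simp)))
    have hlog : -Real.log s ≤ logFac s := by
      rw [← Real.log_inv, inv_eq_one_div]
      exact Real.log_le_log (one_div_pos.mpr hs.1) (le_add_of_nonneg_left (exp_pos 1).le)
    refine ENNReal.ofReal_le_ofReal
      (mul_le_mul_of_nonneg_left ?_ (inv_nonneg.mpr hs.1.le))
    exact Real.rpow_le_rpow_of_nonpos hpos hlog (by linarith)
  have hfin : ∫⁻ s in J, ENNReal.ofReal (s⁻¹ * logFac s ^ (-β)) ≠ ⊤ :=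
    ne_top_of_le_ne_top (integrableOn_inv_mul_neg_log_rpow hβ).lintegral_lt_top.ne
      (setLIntegral_mono' measurableSet_Ioo hle)
  have hvol : Filter.Tendsto (fun T => volume.restrict J (Ioo 0 T)) (nhdsWithin 0 (Ioi 0))
      (nhds 0) := by
    have hlin : Filter.Tendsto (fun T : ℝ => ENNReal.ofReal (T - 0)) (nhdsWithin 0 (Ioi 0))
        (nhds 0) :=
      tendsto_nhdsWithin_of_tendsto_nhds
        ((ENNReal.continuous_ofReal.comp (continuous_sub_right 0)).tendsto' _ _ (by simp))
    refine tendsto_of_tendsto_of_tendsto_of_le_of_le tendsto_const_nhds hlin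
      (fun _ => zero_le) fun T => ?_
    rw [← Real.volume_Ioo]
    exact Measure.restrict_apply_le J _
  refine (tendsto_setLIntegral_zero hfin hvol).congr' ?_
  filter_upwards [Ioo_mem_nhdsGT (exp_pos (-1))] with T hT
  rw [Measure.restrict_restrict measurableSet_Ioo,
    inter_eq_left.mpr (Ioo_subset_Ioo_right hT.2.le)]

end LogFactor

section Nonlinearity

/-- The odd power `|a|^{p-1} a`, the nonlinearity of the equation. -/
noncomputable def signedRpow (p a : ℝ) : ℝ :=
  |a| ^ (p - 1) * a

theorem signedRpow_zero (p : ℝ) : signedRpow p 0 = 0 :=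
  mul_zero _

@[fun_prop]
theorem measurable_signedRpow (p : ℝ) : Measurable (signedRpow p) := by
  unfold signedRpow
  fun_prop

theorem hasDerivAt_signedRpow {p : ℝ} (hp : 1 < p) (a : ℝ) :
    HasDerivAt (signedRpow p) (p * |a| ^ (p - 1)) a := by
  rcases eq_or_ne a 0 with rfl | ha
  · rw [abs_zero, zero_rpow (by linarith), mul_zero, hasDerivAt_iff_tendsto_slope]
    have hcont : Continuous fun x : ℝ => |x| ^ (p - 1) :=
      continuous_abs.rpow_const fun _ => Or.inr (by linarith)
    refine ((hcont.tendsto' 0 0 ?_).mono_left nhdsWithin_le_nhds).congr' ?_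
    · rw [abs_zero, zero_rpow (by linarith)]
    · filter_upwards [self_mem_nhdsWithin] with x hx
      rw [slope_def_field, signedRpow_zero, sub_zero, sub_zero, signedRpow,
        mul_div_cancel_right₀ _ hx]
  · have habs : 0 < |a| := abs_pos.mpr ha
    refine (((hasDerivAt_abs ha).rpow_const (Or.inl habs.ne')).mul (hasDerivAt_id a)).congr_deriv ?_
    rw [rpow_sub_one habs.ne', id]
    field_simp
    rw [mul_right_comm, sign_mul_self]
    ring

theorem abs_signedRpow_sub_signedRpow_le {p : ℝ} (hp : 1 < p) (a b : ℝ) :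
    |signedRpow p a - signedRpow p b| ≤ p * max |a| |b| ^ (p - 1) * |a - b| := by
  have hmem {c : ℝ} (hc : |c| ≤ max |a| |b|) : c ∈ Icc (-max |a| |b|) (max |a| |b|) :=
    abs_le.mp hc
  refine (convex_Icc _ _).norm_image_sub_le_of_norm_hasDerivWithin_le
    (fun c _ => (hasDerivAt_signedRpow hp c).hasDerivWithinAt) (fun c hc => ?_)
    (hmem (le_max_right _ _)) (hmem (le_max_left _ _))
  have : |c| ≤ max |a| |b| := abs_le.mpr hc
  rw [Real.norm_of_nonneg (by positivity)]
  gcongr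

theorem enorm_signedRpow_sub_signedRpow_le {p : ℝ} (hp : 1 < p) {a b : ℝ} {R : ℝ≥0∞}
    (ha : ‖a‖ₑ ≤ R) (hb : ‖b‖ₑ ≤ R) :
    ‖signedRpow p a - signedRpow p b‖ₑ ≤ ENNReal.ofReal p * R ^ (p - 1) * ‖a - b‖ₑ := by
  have hp' : 0 ≤ p - 1 := by linarith
  have hmax : ENNReal.ofReal (max |a| |b|) ≤ R := by
    rw [ENNReal.ofReal_max, ← Real.enorm_eq_ofReal_abs, ← Real.enorm_eq_ofReal_abs]
    exact max_le ha hb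
  calc ‖signedRpow p a - signedRpow p b‖ₑ
      ≤ ENNReal.ofReal (p * max |a| |b| ^ (p - 1) * |a - b|) := by
        rw [Real.enorm_eq_ofReal_abs]
        exact ENNReal.ofReal_le_ofReal (abs_signedRpow_sub_signedRpow_le hp a b)
    _ = ENNReal.ofReal p * ENNReal.ofReal (max |a| |b|) ^ (p - 1) * ‖a - b‖ₑ := by
        rw [ENNReal.ofReal_mul (by positivity), ENNReal.ofReal_mul (by linarith),
          ENNReal.ofReal_rpow_of_nonneg (by positivity) hp', Real.enorm_eq_ofReal_abs]
    _ ≤ ENNReal.ofReal p * R ^ (p - 1) * ‖a - b‖ₑ := by gcongr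

end Nonlinearity

section Picard

variable {X F : Type*} [MeasurableSpace X] [NormedAddCommGroup F] [MeasurableSpace F]
  {A : X → ℝ≥0∞} {Φ : (X → F) → X → F}

/-- A map on measurable functions to which the Picard iteration from `0` applies: the distance of
functions is measured pointwise in units of the weight `A`, one step moves `0` by at most one unit,
and distances are halved on the ball of radius two, which is then invariant. -/
structure IsPicardMap (A : X → ℝ≥0∞) (Φ : (X → F) → X → F) : Prop where
  measurable : ∀ v, Measurable v → Measurable (Φ v)
  enorm_zero_le : ∀ x, ‖Φ 0 x‖ₑ ≤ A x
  enorm_sub_le : ∀ v w, Measurable v → Measurable w → (∀ x, ‖v x‖ₑ ≤ 2 * A x) →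
    (∀ x, ‖w x‖ₑ ≤ 2 * A x) → ∀ δ : ℝ≥0∞, δ ≠ ⊤ → (∀ x, ‖v x - w x‖ₑ ≤ δ * A x) →
    ∀ x, ‖Φ v x - Φ w x‖ₑ ≤ δ / 2 * A x

namespace IsPicardMap

theorem enorm_le (hΦ : IsPicardMap A Φ) {v : X → F} (hv : Measurable v)
    (hvA : ∀ x, ‖v x‖ₑ ≤ 2 * A x) (x : X) : ‖Φ v x‖ₑ ≤ 2 * A x := by
  have hdist : ‖Φ v x - Φ 0 x‖ₑ ≤ 2 / 2 * A x := hΦ.enorm_sub_le v 0 hv measurable_const hvA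
    (by simp) 2 ofNat_ne_top (by simpa using hvA) x
  rw [ENNReal.div_self two_ne_zero ofNat_ne_top, one_mul] at hdist
  calc ‖Φ v x‖ₑ = ‖Φ v x - Φ 0 x + Φ 0 x‖ₑ := by rw [sub_add_cancel]
    _ ≤ A x + A x := (enorm_add_le _ _).trans (add_le_add hdist (hΦ.enorm_zero_le x))
    _ = 2 * A x := (two_mul _).symm

theorem measurable_iterate_and_enorm_le (hΦ : IsPicardMap A Φ) (k : ℕ) :
    Measurable (Φ^[k] 0) ∧ ∀ x, ‖Φ^[k] 0 x‖ₑ ≤ 2 * A x := by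
  induction k with
  | zero => exact ⟨measurable_const, by simp⟩
  | succ k ih =>
    rw [Function.iterate_succ_apply']
    exact ⟨hΦ.measurable _ ih.1, hΦ.enorm_le ih.1 ih.2⟩

theorem edist_iterate_succ_le (hΦ : IsPicardMap A Φ) (k : ℕ) (x : X) :
    edist (Φ^[k] 0 x) (Φ^[k + 1] 0 x) ≤ A x / 2 ^ k := by
  rw [edist_comm, edist_eq_enorm_sub, ENNReal.div_eq_inv_mul]
  induction k generalizing x with
  | zero => simpa using hΦ.enorm_zero_le x
  | succ k ih =>
    have hk := hΦ.measurable_iterate_and_enorm_le k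
    have hk' := hΦ.measurable_iterate_and_enorm_le (k + 1)
    rw [Function.iterate_succ_apply' Φ (k + 1), Function.iterate_succ_apply' Φ k, pow_succ,
      ENNReal.mul_inv (by simp) (by simp), ← div_eq_mul_inv]
    rw [Function.iterate_succ_apply'] at hk' ih
    exact hΦ.enorm_sub_le _ _ hk'.1 hk.1 hk'.2 hk.2 _ (by simp) ih x

theorem exists_measurable_fixedPoint [CompleteSpace F] [BorelSpace F] (hΦ : IsPicardMap A Φ)
    (hA : ∀ x, A x ≠ ⊤) : ∃ u, Measurable u ∧ (∀ x, ‖u x‖ₑ ≤ 2 * A x) ∧ Φ u = u := by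
  have hU := hΦ.measurable_iterate_and_enorm_le
  choose u hu using fun x => cauchySeq_tendsto_of_complete
    (cauchySeq_of_edist_le_geometric_two (A x) (hA x) (hΦ.edist_iterate_succ_le · x))
  have humeas : Measurable u :=
    measurable_of_tendsto_metrizable (fun k => (hU k).1) (tendsto_pi_nhds.mpr hu)
  have huA (x : X) : ‖u x‖ₑ ≤ 2 * A x :=
    le_of_tendsto' ((continuous_enorm.tendsto _).comp (hu x)) fun k => (hU k).2 x
  have hdist (k : ℕ) (x : X) : ‖Φ^[k] 0 x - u x‖ₑ ≤ 2 / 2 ^ k * A x := by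
    rw [← edist_eq_enorm_sub, ← ENNReal.mul_div_right_comm]
    exact edist_le_of_edist_le_geometric_two_of_tendsto (A x) (hΦ.edist_iterate_succ_le · x)
      (hu x) k
  refine ⟨u, humeas, huA, funext fun x => ?_⟩
  have hhalf (k : ℕ) : 2 / 2 ^ k / 2 = (2⁻¹ : ℝ≥0∞) ^ k := by
    rw [div_eq_mul_inv, div_eq_mul_inv, mul_right_comm,
      ENNReal.mul_inv_cancel two_ne_zero ofNat_ne_top, one_mul, ENNReal.inv_pow]
  have hbound (k : ℕ) : edist (Φ^[k + 1] 0 x) (Φ u x) ≤ 2⁻¹ ^ k * A x := by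
    rw [Function.iterate_succ_apply', edist_eq_enorm_sub, ← hhalf]
    exact hΦ.enorm_sub_le _ _ (hU k).1 humeas (hU k).2 huA _ (by finiteness) (hdist k) x
  have hlim : Filter.Tendsto (fun k : ℕ => 2⁻¹ ^ k * A x) Filter.atTop (nhds 0) := by
    simpa only [zero_mul] using ENNReal.Tendsto.mul_const
      (ENNReal.tendsto_pow_atTop_nhds_zero_of_lt_one ENNReal.one_half_lt_one) (Or.inr (hA x))
  refine tendsto_nhds_unique (tendsto_iff_edist_tendsto_0.mpr ?_)
    ((hu x).comp (Filter.tendsto_add_atTop_nat 1))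
  exact tendsto_of_tendsto_of_tendsto_of_le_of_le tendsto_const_nhds hlim (fun _ => zero_le) hbound

end IsPicardMap

end Picard

section HeatKernel

variable {n : ℕ}

local notation "ℝⁿ" => EuclideanSpace ℝ (Fin n)

theorem heatKernel_nonneg (x : ℝⁿ) {t : ℝ} (ht : 0 ≤ t) : 0 ≤ heatKernel n x t := by
  unfold heatKernel
  positivity

@[fun_prop]
theorem measurable_heatKernel {β : Type*} [MeasurableSpace β] {f : β → ℝⁿ} {g : β → ℝ}
    (hf : Measurable f) (hg : Measurable g) :
    Measurable fun b => heatKernel n (f b) (g b) := by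
  unfold heatKernel
  fun_prop

/-- The heat kernel as an extended nonnegative function of the space variable. The heat evolution
`S(t)f` of `f : ℝⁿ → ℝ≥0∞` is the convolution `eheatKernel n t ⋆ₗ f`, which exists without any
integrability assumption. -/
noncomputable def eheatKernel (n : ℕ) (t : ℝ) (x : EuclideanSpace ℝ (Fin n)) : ℝ≥0∞ :=
  ENNReal.ofReal (heatKernel n x t)

@[fun_prop]
theorem measurable_eheatKernel (t : ℝ) : Measurable (eheatKernel n t) := by
  unfold eheatKernel
  fun_prop

theorem lconvolution_eheatKernel_apply (t : ℝ) (f : ℝⁿ → ℝ≥0∞) (x : ℝⁿ) :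
    (eheatKernel n t ⋆ₗ f) x = ∫⁻ y, eheatKernel n t (x - y) * f y := by
  rw [lconvolution_comm, lconvolution_def]
  simp only [neg_add_eq_sub, mul_comm]

theorem lintegral_eheatKernel {t : ℝ} (ht : 0 < t) : ∫⁻ x, eheatKernel n t x = 1 := by
  have hker (x : ℝⁿ) : eheatKernel n t x = ENNReal.ofReal ((4 * π * t) ^ (-(n : ℝ) / 2)) *
      ENNReal.ofReal (rexp (-(1 / (4 * t)) * ‖x - 0‖ ^ 2)) := by
    rw [← ENNReal.ofReal_mul (by positivity), sub_zero, eheatKernel, heatKernel]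
    congr 3
    ring
  have hscale : π / (1 / (4 * t)) = 4 * π * t := by field_simp
  simp only [hker]
  rw [lintegral_const_mul _ (by fun_prop), lintegral_exp_neg_mul_sq_norm_sub (by positivity),
    ← ENNReal.ofReal_mul (by positivity), finrank_euclideanSpace_fin, hscale, neg_div,
    rpow_neg (by positivity), inv_mul_cancel₀ (by positivity), ENNReal.ofReal_one]

theorem eheatKernel_lconvolution_eheatKernel {a b : ℝ} (ha : 0 < a) (hb : 0 < b) :
    eheatKernel n a ⋆ₗ eheatKernel n b = eheatKernel n (a + b) := by
  ext z
  set c := (a + b) / (4 * a * b) with hc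
  have hker (y : ℝⁿ) : eheatKernel n a y * eheatKernel n b (-y + z) =
      ENNReal.ofReal ((4 * π * a) ^ (-(n : ℝ) / 2) * (4 * π * b) ^ (-(n : ℝ) / 2) *
        rexp (-‖z‖ ^ 2 / (4 * (a + b)))) *
      ENNReal.ofReal (rexp (-c * ‖y - (a / (a + b)) • z‖ ^ 2)) := by
    rw [eheatKernel, eheatKernel, ← ENNReal.ofReal_mul (heatKernel_nonneg _ ha.le),
      ← ENNReal.ofReal_mul (by positivity), mul_assoc _ (rexp (-‖z‖ ^ 2 / (4 * (a + b)))),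
      ← Real.exp_add, ← neg_sq_norm_div_add_neg_sq_norm_div y z ha hb, Real.exp_add, heatKernel,
      heatKernel, neg_add_eq_sub]
    congr 1
    ring
  have hconst : (4 * π * a) ^ (-(n : ℝ) / 2) * (4 * π * b) ^ (-(n : ℝ) / 2) *
      (π / c) ^ ((n : ℝ) / 2) = (4 * π * (a + b)) ^ (-(n : ℝ) / 2) := by
    rw [neg_div, ← mul_rpow (by positivity) (by positivity), rpow_neg (by positivity),
      rpow_neg (by positivity), ← inv_rpow (by positivity), ← inv_rpow (by positivity),
      ← mul_rpow (by positivity) (by positivity)]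
    congr 1
    rw [hc]
    field_simp
  rw [lconvolution_def]
  simp only [hker]
  rw [lintegral_const_mul _ (by fun_prop), lintegral_exp_neg_mul_sq_norm_sub (by positivity),
    ← ENNReal.ofReal_mul (by positivity), finrank_euclideanSpace_fin, eheatKernel, heatKernel,
    ← hconst]
  congr 1
  ring

theorem eheatKernel_lconvolution_lconvolution {f : ℝⁿ → ℝ≥0∞} (hf : AEMeasurable f) {a b : ℝ}
    (ha : 0 < a) (hb : 0 < b) :
    eheatKernel n a ⋆ₗ eheatKernel n b ⋆ₗ f = eheatKernel n (a + b) ⋆ₗ f := by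
  rw [lconvolution_assoc₀ (by fun_prop) (by fun_prop) hf,
    eheatKernel_lconvolution_eheatKernel ha hb]

theorem heatKernel_le_mul_heatKernel_two_mul {t : ℝ} (ht : 0 < t) {x y : ℝⁿ}
    (hxy : dist x y < √t) :
    heatKernel n x t ≤ rexp (1 / 4) * 2 ^ ((n : ℝ) / 2) * heatKernel n y (2 * t) := by
  have hnorm : ‖y‖ ^ 2 ≤ 2 * ‖x‖ ^ 2 + 2 * t := by
    have htri : ‖y‖ ≤ ‖x‖ + √t :=
      (norm_le_norm_add_norm_sub' y x).trans (by rw [← dist_eq_norm, dist_comm]; gcongr)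
    nlinarith [norm_nonneg y, sq_nonneg (‖x‖ - √t), Real.sq_sqrt ht.le]
  have hexp : -‖x‖ ^ 2 / (4 * t) ≤ 1 / 4 + -‖y‖ ^ 2 / (4 * (2 * t)) := by
    field_simp
    linarith
  have hpow : (4 * π * t) ^ (-(n : ℝ) / 2) =
      2 ^ ((n : ℝ) / 2) * (4 * π * (2 * t)) ^ (-(n : ℝ) / 2) := by
    rw [show 4 * π * (2 * t) = 2 * (4 * π * t) by ring,
      mul_rpow (y := 4 * π * t) two_pos.le (by positivity), ← mul_assoc, neg_div,
      ← Real.rpow_add two_pos, add_neg_cancel, Real.rpow_zero, one_mul]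
  calc heatKernel n x t
      ≤ (4 * π * t) ^ (-(n : ℝ) / 2) * (rexp (1 / 4) * rexp (-‖y‖ ^ 2 / (4 * (2 * t)))) := by
        rw [heatKernel, ← Real.exp_add]
        gcongr
    _ = rexp (1 / 4) * 2 ^ ((n : ℝ) / 2) * heatKernel n y (2 * t) := by
        rw [hpow, heatKernel]
        ring

theorem volume_ball_mul_eheatKernel_lconvolution_le {f : ℝⁿ → ℝ≥0∞} (hf : AEMeasurable f) {t : ℝ}
    (ht : 0 < t) (x : ℝⁿ) :
    volume (Metric.ball (0 : ℝⁿ) √t) * (eheatKernel n t ⋆ₗ f) x ≤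
      ENNReal.ofReal (rexp (1 / 4) * 2 ^ ((n : ℝ) / 2)) *
        ⨆ w, ∫⁻ y in Metric.ball w √t, f y := by
  set D := rexp (1 / 4) * 2 ^ ((n : ℝ) / 2)
  have hker (y : ℝⁿ) : volume (Metric.ball (0 : ℝⁿ) √t) * (eheatKernel n t (x - y) * f y) ≤
      f y * ∫⁻ w in Metric.ball y √t, ENNReal.ofReal D * eheatKernel n (2 * t) (x - w) := by
    rw [mul_comm (eheatKernel n t _), mul_left_comm, ← Measure.addHaar_ball_center volume y,
      mul_comm (volume _), ← setLIntegral_const (Metric.ball y √t)]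
    gcongr f y * ?_
    refine setLIntegral_mono (by fun_prop) fun w hw => ?_
    rw [eheatKernel, eheatKernel, ← ENNReal.ofReal_mul (by positivity)]
    refine ENNReal.ofReal_le_ofReal (heatKernel_le_mul_heatKernel_two_mul ht ?_)
    rwa [dist_sub_left, dist_comm]
  calc volume (Metric.ball (0 : ℝⁿ) √t) * (eheatKernel n t ⋆ₗ f) x
      = ∫⁻ y, volume (Metric.ball (0 : ℝⁿ) √t) * (eheatKernel n t (x - y) * f y) := by
        rw [lconvolution_eheatKernel_apply, lintegral_const_mul'' _ (by fun_prop)]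
    _ ≤ ∫⁻ y, f y * ∫⁻ w in Metric.ball y √t, ENNReal.ofReal D * eheatKernel n (2 * t) (x - w) :=
        lintegral_mono hker
    _ = ∫⁻ w, ENNReal.ofReal D * eheatKernel n (2 * t) (x - w) * ∫⁻ y in Metric.ball w √t, f y :=
        lintegral_mul_setLIntegral_ball_comm hf (by fun_prop) _
    _ ≤ ∫⁻ w, ENNReal.ofReal D * eheatKernel n (2 * t) (x - w) *
          ⨆ z, ∫⁻ y in Metric.ball z √t, f y :=
        lintegral_mono fun w => by gcongr; exact le_iSup_of_le w le_rfl
    _ = ENNReal.ofReal D * ⨆ w, ∫⁻ y in Metric.ball w √t, f y := by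
        rw [lintegral_mul_const _ (by fun_prop), lintegral_const_mul _ (by fun_prop),
          lintegral_sub_left_eq_self, lintegral_eheatKernel (by positivity), mul_one]

theorem zygNormUL_one_le_iff {α ρ : ℝ} {f : ℝⁿ → ℝ} {C : ℝ≥0∞} :
    zygNormUL n 1 α ρ f ≤ C ↔ ∀ z, ∀ s, 0 < s → ∀ E, MeasurableSet E →
      volume E = ENNReal.ofReal s →
        ENNReal.ofReal (logFac s) ^ α * ∫⁻ x in Metric.ball z ρ ∩ E, ‖f x‖ₑ ≤ C := by
  simp only [zygNormUL, zygNorm, one_div, inv_one, ENNReal.rpow_one, Real.rpow_one,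
    ENNReal.mul_iSup, iSup_le_iff, Subtype.forall, mem_Ioi, and_imp, ← Real.enorm_eq_ofReal_abs,
    enorm_indicator_eq_indicator_enorm, lintegral_indicator measurableSet_ball,
    Measure.restrict_restrict measurableSet_ball]

theorem zygNormUL_one_le_of_enorm_le {α β ρ σ t : ℝ} (hβα : β ≤ α) (hσρ : σ ≤ ρ) (ht : 0 < t)
    {φ u : ℝⁿ → ℝ} (hφ : AEStronglyMeasurable φ) {c : ℝ≥0∞} (hc : c ≠ ⊤)
    (hu : ∀ x, ‖u x‖ₑ ≤ c * (eheatKernel n t ⋆ₗ (‖φ ·‖ₑ)) x) :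
    zygNormUL n 1 β σ u ≤ c * zygNormUL n 1 α ρ φ := by
  refine zygNormUL_one_le_iff.mpr fun z s hs E hE hEs => ?_
  set L := ENNReal.ofReal (logFac s)
  have hL : 1 ≤ L := ENNReal.one_le_ofReal.mpr (one_le_logFac hs.le)
  have htranslate (y : ℝⁿ) : ∫⁻ x in Metric.ball z ρ ∩ E, ‖φ (-y + x)‖ₑ =
      ∫⁻ x in Metric.ball (-y + z) ρ ∩ (y + ·) ⁻¹' E, ‖φ x‖ₑ := by
    refine Eq.trans ?_ ((measurePreserving_add_left volume (-y)).setLIntegral_comp_preimage_emb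
      (measurableEmbedding_addLeft (-y)) (‖φ ·‖ₑ) _)
    congr 2
    ext x
    simp only [mem_inter_iff, mem_preimage, Metric.mem_ball, dist_add_left, add_neg_cancel_left]
  calc L ^ β * ∫⁻ x in Metric.ball z σ ∩ E, ‖u x‖ₑ
      ≤ L ^ α * ∫⁻ x in Metric.ball z ρ ∩ E, c * (eheatKernel n t ⋆ₗ (‖φ ·‖ₑ)) x := by
        gcongr
        exact hu _
    _ = c * (L ^ α * ∫⁻ x in Metric.ball z ρ ∩ E, (eheatKernel n t ⋆ₗ (‖φ ·‖ₑ)) x) := by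
        rw [lintegral_const_mul' _ _ hc, mul_left_comm]
    _ ≤ c * (L ^ α * ⨆ y, ∫⁻ x in Metric.ball z ρ ∩ E, ‖φ (-y + x)‖ₑ) := by
        gcongr
        refine (setLIntegral_lconvolution_le (by fun_prop) hφ.enorm _).trans_eq ?_
        rw [lintegral_eheatKernel ht, one_mul]
    _ ≤ c * zygNormUL n 1 α ρ φ := by
        simp only [ENNReal.mul_iSup, htranslate]
        refine iSup_le fun y => mul_le_mul_right (zygNormUL_one_le_iff.mp le_rfl _ s hs _
          (measurable_const_add y hE) ?_) _
        rw [measure_preimage_add, hEs]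

theorem ofReal_logFac_rpow_mul_setLIntegral_le {α ρ s : ℝ} (hs : 0 < s) (f : ℝⁿ → ℝ) {z : ℝⁿ}
    {E : Set ℝⁿ} (hE : MeasurableSet E) (hEz : E ⊆ Metric.ball z ρ)
    (hvol : volume E = ENNReal.ofReal s) :
    ENNReal.ofReal (logFac s ^ α) * ∫⁻ x in E, ‖f x‖ₑ ≤ zygNormUL n 1 α ρ f := by
  have hlog : 0 < logFac s := zero_lt_one.trans_le (one_le_logFac hs.le)
  rw [← ENNReal.ofReal_rpow_of_pos hlog, ← inter_eq_right.mpr hEz]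
  exact zygNormUL_one_le_iff.mp le_rfl z s hs E hE hvol

theorem exists_mul_eheatKernel_lconvolution_enorm_le (hn : n ≠ 0) {α : ℝ} (hα : 0 ≤ α)
    {φ : ℝⁿ → ℝ} (hφ : AEStronglyMeasurable φ) (hnorm : zygNormUL n 1 α 1 φ ≠ ⊤) :
    ∃ C : ℝ≥0∞, C ≠ ⊤ ∧ ∀ t ∈ Ioc (0 : ℝ) 1, ∀ x,
      ENNReal.ofReal (t ^ ((n : ℝ) / 2) * logFac t ^ α) * (eheatKernel n t ⋆ₗ (‖φ ·‖ₑ)) x ≤ C := by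
  set c := (volume (Metric.ball (0 : ℝⁿ) 1)).toReal
  have hc : 0 < c := ENNReal.toReal_pos (Metric.measure_ball_pos _ _ one_pos).ne'
    measure_ball_lt_top.ne
  set A := (2 * (1 + c)) ^ α / c
  set D := rexp (1 / 4) * 2 ^ ((n : ℝ) / 2)
  refine ⟨ENNReal.ofReal A * (ENNReal.ofReal D * zygNormUL n 1 α 1 φ), by finiteness,
    fun t ht x => ?_⟩
  set s := c * √t ^ n
  have hr : 0 < √t := sqrt_pos.mpr ht.1
  have hs : 0 < s := by positivity
  have hvol (w : ℝⁿ) : volume (Metric.ball w √t) = ENNReal.ofReal s := by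
    rw [Measure.addHaar_ball_of_pos _ _ hr, finrank_euclideanSpace_fin, mul_comm,
      ← ENNReal.ofReal_toReal (measure_ball_lt_top (x := (0 : ℝⁿ)) (r := 1)).ne,
      ← ENNReal.ofReal_mul hc.le]
  have hlog : 0 ≤ logFac s := zero_le_one.trans (one_le_logFac hs.le)
  calc ENNReal.ofReal (t ^ ((n : ℝ) / 2) * logFac t ^ α) * (eheatKernel n t ⋆ₗ (‖φ ·‖ₑ)) x
      ≤ ENNReal.ofReal (A * (logFac s ^ α * s)) * (eheatKernel n t ⋆ₗ (‖φ ·‖ₑ)) x := by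
        gcongr ENNReal.ofReal ?_ * _
        exact rpow_mul_logFac_rpow_le hn hα hc ht.1 ht.2
    _ = ENNReal.ofReal A * (ENNReal.ofReal (logFac s ^ α) *
          (volume (Metric.ball (0 : ℝⁿ) √t) * (eheatKernel n t ⋆ₗ (‖φ ·‖ₑ)) x)) := by
        rw [ENNReal.ofReal_mul (by positivity), ENNReal.ofReal_mul (by positivity), hvol,
          mul_assoc, mul_assoc]
    _ ≤ ENNReal.ofReal A * (ENNReal.ofReal (logFac s ^ α) *
          (ENNReal.ofReal D * ⨆ w, ∫⁻ y in Metric.ball w √t, ‖φ y‖ₑ)) := by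
        gcongr ENNReal.ofReal A * (ENNReal.ofReal (logFac s ^ α) * ?_)
        exact volume_ball_mul_eheatKernel_lconvolution_le hφ.enorm ht.1 x
    _ ≤ ENNReal.ofReal A * (ENNReal.ofReal D * zygNormUL n 1 α 1 φ) := by
        rw [mul_left_comm (ENNReal.ofReal (logFac s ^ α)), ENNReal.mul_iSup]
        gcongr
        exact iSup_le fun w => ofReal_logFac_rpow_mul_setLIntegral_le hs φ measurableSet_ball
          (Metric.ball_subset_ball (sqrt_le_one.mpr ht.2)) (hvol w)

/-- The heat evolution `(S(t)φ)(x) = ∫ G(x - y, t) φ(y) dy` of the data `φ`, as a function of the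
space-time point `q = (x, t)`. -/
noncomputable def heatEvolution (φ : ℝⁿ → ℝ) (q : ℝⁿ × ℝ) : ℝ :=
  ∫ y, heatKernel n (q.1 - y) q.2 * φ y

/-- The Duhamel integral `∫₀ᵗ S(t - s) g(s) ds` of the source term `g`, as a function of the
space-time point `q = (x, t)`. -/
noncomputable def duhamel (g : ℝⁿ × ℝ → ℝ) (q : ℝⁿ × ℝ) : ℝ :=
  ∫ s in Ioo 0 q.2, ∫ y, heatKernel n (q.1 - y) (q.2 - s) * g (y, s)

theorem measurable_heatEvolution {φ : ℝⁿ → ℝ} (hφ : AEStronglyMeasurable φ) :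
    Measurable (heatEvolution φ) := by
  have hmk : heatEvolution φ = fun q : ℝⁿ × ℝ => ∫ y, heatKernel n (q.1 - y) q.2 * hφ.mk φ y := by
    ext q
    refine integral_congr_ae ?_
    filter_upwards [hφ.ae_eq_mk] with y hy
    rw [hy]
  have : Measurable (hφ.mk φ) := hφ.stronglyMeasurable_mk.measurable
  have hmeas : Measurable fun z : (ℝⁿ × ℝ) × ℝⁿ =>
      heatKernel n (z.1.1 - z.2) z.1.2 * hφ.mk φ z.2 := by
    fun_prop
  rw [hmk]
  exact hmeas.stronglyMeasurable.integral_prod_right'.measurable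

theorem measurable_duhamel {g : ℝⁿ × ℝ → ℝ} (hg : Measurable g) : Measurable (duhamel g) := by
  have hmeas : Measurable fun w : ((ℝⁿ × ℝ) × ℝ) × ℝⁿ =>
      heatKernel n (w.1.1.1 - w.2) (w.1.1.2 - w.1.2) * g (w.2, w.1.2) := by
    fun_prop
  have hS : MeasurableSet {z : (ℝⁿ × ℝ) × ℝ | z.2 ∈ Ioo 0 z.1.2} :=
    (measurableSet_lt measurable_const measurable_snd).inter
      (measurableSet_lt measurable_snd (by fun_prop))
  have hindicator : duhamel g = fun q => ∫ s, {z : (ℝⁿ × ℝ) × ℝ | z.2 ∈ Ioo 0 z.1.2}.indicator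
      (fun z => ∫ y, heatKernel n (z.1.1 - y) (z.1.2 - z.2) * g (y, z.2)) (q, s) := by
    ext q
    rw [duhamel, ← integral_indicator measurableSet_Ioo]
    rfl
  rw [hindicator]
  exact (hmeas.stronglyMeasurable.integral_prod_right'.indicator hS).integral_prod_right'.measurable

theorem enorm_heatKernel_mul {t : ℝ} (ht : 0 ≤ t) (x : ℝⁿ) (a : ℝ) :
    ‖heatKernel n x t * a‖ₑ = eheatKernel n t x * ‖a‖ₑ := by
  rw [enorm_mul, Real.enorm_of_nonneg (heatKernel_nonneg x ht), eheatKernel]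

theorem enorm_heatEvolution_le (φ : ℝⁿ → ℝ) {t : ℝ} (ht : 0 ≤ t) (x : ℝⁿ) :
    ‖heatEvolution φ (x, t)‖ₑ ≤ (eheatKernel n t ⋆ₗ (‖φ ·‖ₑ)) x := by
  simp only [lconvolution_eheatKernel_apply, ← enorm_heatKernel_mul ht]
  exact enorm_integral_le_lintegral_enorm _

theorem integrable_heatKernel_mul {φ : ℝⁿ → ℝ} (hφ : AEStronglyMeasurable φ) {t : ℝ} (ht : 0 ≤ t)
    {x : ℝⁿ} (hx : (eheatKernel n t ⋆ₗ (‖φ ·‖ₑ)) x ≠ ⊤) :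
    Integrable fun y => heatKernel n (x - y) t * φ y := by
  refine ⟨(Measurable.aestronglyMeasurable (by fun_prop)).mul hφ, ?_⟩
  rw [hasFiniteIntegral_iff_enorm]
  simpa only [enorm_heatKernel_mul ht, ← lconvolution_eheatKernel_apply] using hx.lt_top

/-- Integrating a source dominated by `H(s) S(s)f` costs only the factor `∫ H`, because
`S(t - s) S(s) f = S(t) f` does not depend on `s`. -/
theorem lintegral_enorm_heatKernel_mul_le {f : ℝⁿ → ℝ≥0∞} (hf : AEMeasurable f) {t : ℝ} {x : ℝⁿ}
    (hx : (eheatKernel n t ⋆ₗ f) x ≠ ⊤) {H : ℝ → ℝ≥0∞} {g : ℝⁿ × ℝ → ℝ}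
    (hg : ∀ s ∈ Ioo 0 t, ∀ y, ‖g (y, s)‖ₑ ≤ H s * (eheatKernel n s ⋆ₗ f) y) :
    ∫⁻ s in Ioo 0 t, ∫⁻ y, ‖heatKernel n (x - y) (t - s) * g (y, s)‖ₑ ≤
      (∫⁻ s in Ioo 0 t, H s) * (eheatKernel n t ⋆ₗ f) x := by
  rw [← lintegral_mul_const' _ _ hx]
  refine setLIntegral_mono' measurableSet_Ioo fun s hs => ?_
  calc ∫⁻ y, ‖heatKernel n (x - y) (t - s) * g (y, s)‖ₑ
      ≤ ∫⁻ y, H s * (eheatKernel n (t - s) (x - y) * (eheatKernel n s ⋆ₗ f) y) := by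
        refine lintegral_mono fun y => ?_
        rw [enorm_heatKernel_mul (sub_nonneg.mpr hs.2.le), mul_left_comm]
        gcongr
        exact hg s hs y
    _ = H s * (eheatKernel n (t - s) ⋆ₗ eheatKernel n s ⋆ₗ f) x := by
        rw [lintegral_const_mul'' _ (by fun_prop), ← lconvolution_eheatKernel_apply]
    _ = H s * (eheatKernel n t ⋆ₗ f) x := by
        rw [eheatKernel_lconvolution_lconvolution hf (sub_pos.mpr hs.2) hs.1, sub_add_cancel]

theorem enorm_duhamel_le {f : ℝⁿ → ℝ≥0∞} (hf : AEMeasurable f) {t : ℝ} {x : ℝⁿ}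
    (hx : (eheatKernel n t ⋆ₗ f) x ≠ ⊤) {H : ℝ → ℝ≥0∞} {g : ℝⁿ × ℝ → ℝ}
    (hg : ∀ s ∈ Ioo 0 t, ∀ y, ‖g (y, s)‖ₑ ≤ H s * (eheatKernel n s ⋆ₗ f) y) :
    ‖duhamel g (x, t)‖ₑ ≤ (∫⁻ s in Ioo 0 t, H s) * (eheatKernel n t ⋆ₗ f) x :=
  calc ‖duhamel g (x, t)‖ₑ
      ≤ ∫⁻ s in Ioo 0 t, ‖∫ y, heatKernel n (x - y) (t - s) * g (y, s)‖ₑ :=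
        enorm_integral_le_lintegral_enorm _
    _ ≤ ∫⁻ s in Ioo 0 t, ∫⁻ y, ‖heatKernel n (x - y) (t - s) * g (y, s)‖ₑ :=
        lintegral_mono fun _ => enorm_integral_le_lintegral_enorm _
    _ ≤ (∫⁻ s in Ioo 0 t, H s) * (eheatKernel n t ⋆ₗ f) x :=
        lintegral_enorm_heatKernel_mul_le hf hx hg

theorem integrable_prod_heatKernel_mul {f : ℝⁿ → ℝ≥0∞} (hf : AEMeasurable f) {t : ℝ} {x : ℝⁿ}
    (hx : (eheatKernel n t ⋆ₗ f) x ≠ ⊤) {H : ℝ → ℝ≥0∞} (hH : ∫⁻ s in Ioo 0 t, H s ≠ ⊤)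
    {g : ℝⁿ × ℝ → ℝ} (hgm : Measurable g)
    (hg : ∀ s ∈ Ioo 0 t, ∀ y, ‖g (y, s)‖ₑ ≤ H s * (eheatKernel n s ⋆ₗ f) y) :
    Integrable (fun ys : ℝⁿ × ℝ => heatKernel n (x - ys.1) (t - ys.2) * g ys)
      (volume.prod (volume.restrict (Ioo 0 t))) := by
  have hmeas : Measurable fun ys : ℝⁿ × ℝ => heatKernel n (x - ys.1) (t - ys.2) * g ys := by
    fun_prop
  refine ⟨hmeas.aestronglyMeasurable, ?_⟩
  rw [hasFiniteIntegral_iff_enorm, lintegral_prod_symm' _ hmeas.enorm]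
  exact (lintegral_enorm_heatKernel_mul_le hf hx hg).trans_lt (by finiteness)

theorem duhamel_sub {g₁ g₂ : ℝⁿ × ℝ → ℝ} {q : ℝⁿ × ℝ}
    (h₁ : Integrable (fun ys : ℝⁿ × ℝ => heatKernel n (q.1 - ys.1) (q.2 - ys.2) * g₁ ys)
      (volume.prod (volume.restrict (Ioo 0 q.2))))
    (h₂ : Integrable (fun ys : ℝⁿ × ℝ => heatKernel n (q.1 - ys.1) (q.2 - ys.2) * g₂ ys)
      (volume.prod (volume.restrict (Ioo 0 q.2)))) :
    duhamel (g₁ - g₂) q = duhamel g₁ q - duhamel g₂ q := by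
  have hsub := h₁.sub h₂
  rw [duhamel, duhamel, duhamel, ← integral_prod_symm _ h₁, ← integral_prod_symm _ h₂,
    ← integral_sub h₁ h₂]
  simp only [Pi.sub_apply, mul_sub]
  exact (integral_prod_symm _ hsub).symm

theorem duhamel_zero : duhamel (0 : ℝⁿ × ℝ → ℝ) = 0 := by
  ext q
  simp only [duhamel, Pi.zero_apply, mul_zero, integral_zero]

/-- The spatially constant bound `B` dominates the heat evolution of `|φ|` on `(0, T)`, and is so
small in `L^{p-1}(0, T)` that the Duhamel map halves distances. -/
structure IsHeatMajorant (p T : ℝ) (φ : ℝⁿ → ℝ) (B : ℝ → ℝ≥0∞) : Prop where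
  lconvolution_le : ∀ s ∈ Ioo 0 T, ∀ x, (eheatKernel n s ⋆ₗ (‖φ ·‖ₑ)) x ≤ B s
  ne_top : ∀ s ∈ Ioo 0 T, B s ≠ ⊤
  lintegral_le : ∫⁻ s in Ioo 0 T, ENNReal.ofReal p * (2 * B s) ^ (p - 1) ≤ 2⁻¹

/-- The heat evolution of `|φ|`, cut off outside the time interval `(0, T)`. -/
noncomputable def heatWeight (T : ℝ) (φ : ℝⁿ → ℝ) : ℝⁿ × ℝ → ℝ≥0∞ :=
  (univ ×ˢ Ioo 0 T).indicator fun q => (eheatKernel n q.2 ⋆ₗ (‖φ ·‖ₑ)) q.1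

/-- The map whose fixed points are the solutions of the integral equation on `(0, T)`, extended by
zero to all times. -/
noncomputable def duhamelMap (p T : ℝ) (φ : ℝⁿ → ℝ) (v : ℝⁿ × ℝ → ℝ) : ℝⁿ × ℝ → ℝ :=
  (univ ×ˢ Ioo 0 T).indicator (heatEvolution φ + duhamel (signedRpow p ∘ v))

theorem heatWeight_apply {T t : ℝ} (ht : t ∈ Ioo 0 T) (φ : ℝⁿ → ℝ) (x : ℝⁿ) :
    heatWeight T φ (x, t) = (eheatKernel n t ⋆ₗ (‖φ ·‖ₑ)) x :=
  indicator_of_mem (mk_mem_prod (mem_univ x) ht) _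

theorem duhamelMap_apply (p : ℝ) {T t : ℝ} (ht : t ∈ Ioo 0 T) (φ : ℝⁿ → ℝ) (v : ℝⁿ × ℝ → ℝ)
    (x : ℝⁿ) :
    duhamelMap p T φ v (x, t) = heatEvolution φ (x, t) + duhamel (signedRpow p ∘ v) (x, t) :=
  indicator_of_mem (mk_mem_prod (mem_univ x) ht) _

theorem duhamelMap_apply_of_notMem (p : ℝ) {T t : ℝ} (ht : t ∉ Ioo 0 T) (φ : ℝⁿ → ℝ)
    (v : ℝⁿ × ℝ → ℝ) (x : ℝⁿ) : duhamelMap p T φ v (x, t) = 0 :=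
  indicator_of_notMem (fun h => ht h.2) _

theorem measurable_duhamelMap (p T : ℝ) {φ : ℝⁿ → ℝ} (hφ : AEStronglyMeasurable φ)
    {v : ℝⁿ × ℝ → ℝ} (hv : Measurable v) : Measurable (duhamelMap p T φ v) :=
  ((measurable_heatEvolution hφ).add
    (measurable_duhamel ((measurable_signedRpow p).comp hv))).indicator
      (MeasurableSet.univ.prod measurableSet_Ioo)

namespace IsHeatMajorant

variable {p T : ℝ} {φ : EuclideanSpace ℝ (Fin n) → ℝ} {B : ℝ → ℝ≥0∞}

theorem lconvolution_ne_top (hB : IsHeatMajorant p T φ B) {t : ℝ} (ht : t ∈ Ioo 0 T) (x : ℝⁿ) :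
    (eheatKernel n t ⋆ₗ (‖φ ·‖ₑ)) x ≠ ⊤ :=
  ne_top_of_le_ne_top (hB.ne_top t ht) (hB.lconvolution_le t ht x)

theorem heatWeight_ne_top (hB : IsHeatMajorant p T φ B) (q : ℝⁿ × ℝ) : heatWeight T φ q ≠ ⊤ := by
  by_cases hq : q.2 ∈ Ioo 0 T
  · rw [heatWeight_apply hq]
    exact hB.lconvolution_ne_top hq q.1
  · rw [heatWeight, indicator_of_notMem fun h => hq h.2]
    exact zero_ne_top

theorem lintegral_mul_le (hB : IsHeatMajorant p T φ B) {δ : ℝ≥0∞} (hδ : δ ≠ ⊤) {t : ℝ}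
    (ht : t ∈ Ioo 0 T) :
    ∫⁻ s in Ioo 0 t, ENNReal.ofReal p * (2 * B s) ^ (p - 1) * δ ≤ δ / 2 := by
  rw [lintegral_mul_const' _ _ hδ, mul_comm, div_eq_mul_inv]
  gcongr
  exact (lintegral_mono_set (Ioo_subset_Ioo_right ht.2.le)).trans hB.lintegral_le

theorem enorm_signedRpow_sub_le (hp : 1 < p) (hB : IsHeatMajorant p T φ B) {v w : ℝⁿ × ℝ → ℝ}
    (hv : ∀ q, ‖v q‖ₑ ≤ 2 * heatWeight T φ q) (hw : ∀ q, ‖w q‖ₑ ≤ 2 * heatWeight T φ q)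
    {δ : ℝ≥0∞} (hδ : ∀ q, ‖v q - w q‖ₑ ≤ δ * heatWeight T φ q) {s : ℝ} (hs : s ∈ Ioo 0 T)
    (y : ℝⁿ) :
    ‖signedRpow p (v (y, s)) - signedRpow p (w (y, s))‖ₑ ≤
      ENNReal.ofReal p * (2 * B s) ^ (p - 1) * δ * (eheatKernel n s ⋆ₗ (‖φ ·‖ₑ)) y := by
  have hle {a : ℝ≥0∞} (ha : a ≤ 2 * heatWeight T φ (y, s)) : a ≤ 2 * B s := by
    rw [heatWeight_apply hs] at ha
    exact ha.trans (mul_le_mul_right (hB.lconvolution_le s hs y) 2)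
  rw [mul_assoc _ δ, ← heatWeight_apply hs]
  exact (enorm_signedRpow_sub_signedRpow_le hp (hle (hv _)) (hle (hw _))).trans
    (mul_le_mul_right (hδ _) _)

theorem integrable_heatKernel_mul_signedRpow (hp : 1 < p) (hB : IsHeatMajorant p T φ B)
    (hφ : AEStronglyMeasurable φ) {v : ℝⁿ × ℝ → ℝ} (hvm : Measurable v)
    (hv : ∀ q, ‖v q‖ₑ ≤ 2 * heatWeight T φ q) {t : ℝ} (ht : t ∈ Ioo 0 T) (x : ℝⁿ) :
    Integrable (fun ys : ℝⁿ × ℝ => heatKernel n (x - ys.1) (t - ys.2) * signedRpow p (v ys))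
      (volume.prod (volume.restrict (Ioo 0 t))) := by
  have hzero : ∀ q : ℝⁿ × ℝ, ‖(0 : ℝⁿ × ℝ → ℝ) q‖ₑ ≤ 2 * heatWeight T φ q := by simp
  have hbound (s : ℝ) (hs : s ∈ Ioo 0 t) (y : ℝⁿ) : ‖signedRpow p (v (y, s))‖ₑ ≤
      ENNReal.ofReal p * (2 * B s) ^ (p - 1) * 2 * (eheatKernel n s ⋆ₗ (‖φ ·‖ₑ)) y := by
    simpa only [Pi.zero_apply, signedRpow_zero, sub_zero] using hB.enorm_signedRpow_sub_le hp hv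
      hzero (by simpa using hv) (Ioo_subset_Ioo_right ht.2.le hs) y
  exact integrable_prod_heatKernel_mul hφ.enorm (hB.lconvolution_ne_top ht x)
    (ne_top_of_le_ne_top (ENNReal.div_ne_top ofNat_ne_top two_ne_zero)
      (hB.lintegral_mul_le ofNat_ne_top ht))
    ((measurable_signedRpow p).comp hvm) hbound

theorem enorm_duhamel_signedRpow_sub_le (hp : 1 < p) (hB : IsHeatMajorant p T φ B)
    (hφ : AEStronglyMeasurable φ) {v w : ℝⁿ × ℝ → ℝ} (hvm : Measurable v) (hwm : Measurable w)
    (hv : ∀ q, ‖v q‖ₑ ≤ 2 * heatWeight T φ q) (hw : ∀ q, ‖w q‖ₑ ≤ 2 * heatWeight T φ q)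
    {δ : ℝ≥0∞} (hδ : δ ≠ ⊤) (hvw : ∀ q, ‖v q - w q‖ₑ ≤ δ * heatWeight T φ q) {t : ℝ}
    (ht : t ∈ Ioo 0 T) (x : ℝⁿ) :
    ‖duhamel (signedRpow p ∘ v) (x, t) - duhamel (signedRpow p ∘ w) (x, t)‖ₑ ≤
      δ / 2 * (eheatKernel n t ⋆ₗ (‖φ ·‖ₑ)) x := by
  have hsub : duhamel (signedRpow p ∘ v - signedRpow p ∘ w) (x, t) =
      duhamel (signedRpow p ∘ v) (x, t) - duhamel (signedRpow p ∘ w) (x, t) :=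
    duhamel_sub (hB.integrable_heatKernel_mul_signedRpow hp hφ hvm hv ht x)
      (hB.integrable_heatKernel_mul_signedRpow hp hφ hwm hw ht x)
  rw [← hsub]
  refine (enorm_duhamel_le hφ.enorm (hB.lconvolution_ne_top ht x) (fun s hs y =>
    hB.enorm_signedRpow_sub_le hp hv hw hvw (Ioo_subset_Ioo_right ht.2.le hs) y)).trans ?_
  gcongr
  exact hB.lintegral_mul_le hδ ht

theorem isPicardMap (hp : 1 < p) (hB : IsHeatMajorant p T φ B) (hφ : AEStronglyMeasurable φ) :
    IsPicardMap (heatWeight T φ) (duhamelMap p T φ) where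
  measurable _ hv := measurable_duhamelMap p T hφ hv
  enorm_zero_le := by
    rintro ⟨x, t⟩
    by_cases ht : t ∈ Ioo 0 T
    · have hzero : signedRpow p ∘ (0 : ℝⁿ × ℝ → ℝ) = 0 := funext fun _ => signedRpow_zero p
      rw [duhamelMap_apply p ht, hzero, duhamel_zero, Pi.zero_apply, add_zero, heatWeight_apply ht]
      exact enorm_heatEvolution_le φ ht.1.le x
    · simp [duhamelMap_apply_of_notMem p ht]
  enorm_sub_le := by
    rintro v w hvm hwm hv hw δ hδ hvw ⟨x, t⟩
    by_cases ht : t ∈ Ioo 0 T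
    · rw [duhamelMap_apply p ht, duhamelMap_apply p ht, add_sub_add_left_eq_sub,
        heatWeight_apply ht]
      exact hB.enorm_duhamel_signedRpow_sub_le hp hφ hvm hwm hv hw hδ hvw ht x
    · simp [duhamelMap_apply_of_notMem p ht]

theorem exists_isSolution (hp : 1 < p) (hB : IsHeatMajorant p T φ B)
    (hφ : AEStronglyMeasurable φ) :
    ∃ u, IsSolution n p T φ u ∧
      ∀ t ∈ Ioo 0 T, ∀ x, ‖u x t‖ₑ ≤ 2 * (eheatKernel n t ⋆ₗ (‖φ ·‖ₑ)) x := by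
  obtain ⟨u, hum, hu, hfix⟩ := (hB.isPicardMap hp hφ).exists_measurable_fixedPoint
    hB.heatWeight_ne_top
  refine ⟨fun x t => u (x, t), ⟨hum, ?_⟩, fun t ht x => heatWeight_apply ht φ x ▸ hu (x, t)⟩
  filter_upwards [Measure.quasiMeasurePreserving_snd.ae (ae_restrict_mem measurableSet_Ioo)]
    with ⟨x, t⟩ ht
  refine ⟨integrable_heatKernel_mul hφ ht.1.le (hB.lconvolution_ne_top ht x),
    hB.integrable_heatKernel_mul_signedRpow hp hφ hum hu ht x, ?_⟩
  exact (congrFun hfix (x, t)).symm.trans (duhamelMap_apply p ht φ u x)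

end IsHeatMajorant

theorem div_ofReal_rpow_mul_logFac_rpow_le {a q α s : ℝ} (hq : 0 ≤ q) (haq : a * q ≤ 1)
    (hs : s ∈ Ioc 0 1) (C : ℝ≥0∞) :
    (C / ENNReal.ofReal (s ^ a * logFac s ^ α)) ^ q ≤
      C ^ q * ENNReal.ofReal (s⁻¹ * logFac s ^ (-(α * q))) := by
  have hlog : 0 < logFac s := zero_lt_one.trans_le (one_le_logFac hs.1.le)
  have hspos : 0 < s := hs.1
  rw [ENNReal.div_rpow_of_nonneg _ _ hq, ENNReal.ofReal_rpow_of_pos (by positivity),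
    div_eq_mul_inv, ← ENNReal.ofReal_inv_of_pos (by positivity)]
  gcongr C ^ q * ENNReal.ofReal ?_
  rw [Real.mul_rpow (by positivity) (by positivity), ← Real.rpow_mul hspos.le,
    ← Real.rpow_mul hlog.le, mul_inv, ← Real.rpow_neg hspos.le, ← Real.rpow_neg hlog.le,
    ← Real.rpow_neg_one s]
  gcongr ?_ * _
  exact Real.rpow_le_rpow_of_exponent_ge hspos hs.2 (neg_le_neg haq)

theorem exists_lintegral_inv_mul_logFac_rpow_le {β : ℝ} (hβ : 1 < β) {K ε : ℝ≥0∞} (hK : K ≠ ⊤)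
    (hε : 0 < ε) :
    ∃ T ∈ Ioc (0 : ℝ) 1, ∫⁻ s in Ioo 0 T, K * ENNReal.ofReal (s⁻¹ * logFac s ^ (-β)) ≤ ε := by
  have hlim := ENNReal.Tendsto.const_mul (tendsto_setLIntegral_Ioo_inv_mul_logFac_rpow hβ)
    (Or.inr hK)
  rw [mul_zero] at hlim
  obtain ⟨T, hle, hT⟩ := ((hlim.eventually_le_const hε).and
    (Ioc_mem_nhdsGT zero_lt_one)).exists
  exact ⟨T, hT, by rwa [lintegral_const_mul' _ _ hK]⟩

theorem exists_isHeatMajorant (hn : n ≠ 0) {p α : ℝ} (hp : 1 < p) (hpn : n * (p - 1) ≤ 2)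
    (hα : 1 < α * (p - 1)) {φ : ℝⁿ → ℝ} (hφ : AEStronglyMeasurable φ)
    (hnorm : zygNormUL n 1 α 1 φ ≠ ⊤) :
    ∃ C : ℝ≥0∞, C ≠ ⊤ ∧ ∃ T ∈ Ioc (0 : ℝ) 1,
      IsHeatMajorant p T φ fun t => C / ENNReal.ofReal (t ^ ((n : ℝ) / 2) * logFac t ^ α) := by
  have hα0 : 0 ≤ α := (pos_of_mul_pos_left (zero_lt_one.trans hα) (sub_pos.mpr hp).le).le
  obtain ⟨C, hC, hdecay⟩ := exists_mul_eheatKernel_lconvolution_enorm_le hn hα0 hφ hnorm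
  obtain ⟨T, hT, hint⟩ := exists_lintegral_inv_mul_logFac_rpow_le hα
    (K := ENNReal.ofReal p * (2 * C) ^ (p - 1)) (ε := 2⁻¹) (by finiteness) (by simp)
  have hweight {t : ℝ} (ht : t ∈ Ioo 0 T) :
      ENNReal.ofReal (t ^ ((n : ℝ) / 2) * logFac t ^ α) ≠ 0 := by
    have hlog : 0 < logFac t := zero_lt_one.trans_le (one_le_logFac ht.1.le)
    have htpos : 0 < t := ht.1
    exact (ENNReal.ofReal_pos.mpr (by positivity)).ne'
  refine ⟨C, hC, T, hT, fun s hs x => ?_, fun s hs => ENNReal.div_ne_top hC (hweight hs),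
    le_trans (setLIntegral_mono' measurableSet_Ioo fun s hs => ?_) hint⟩
  · rw [ENNReal.le_div_iff_mul_le (Or.inl (hweight hs)) (Or.inl ofReal_ne_top), mul_comm]
    exact hdecay s ⟨hs.1, hs.2.le.trans hT.2⟩ x
  · rw [← mul_div_assoc, mul_assoc]
    exact mul_le_mul_right (div_ofReal_rpow_mul_logFac_rpow_le (sub_pos.mpr hp).le
      (by linarith) ⟨hs.1, hs.2.le.trans hT.2⟩ (2 * C)) _

theorem iSup_zygNormUL_one_lt_top {α β σ T : ℝ} (hβα : β ≤ α) (hσ : σ ≤ 1) {φ : ℝⁿ → ℝ}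
    (hφ : AEStronglyMeasurable φ) (hnorm : zygNormUL n 1 α 1 φ < ⊤) {u : ℝⁿ → ℝ → ℝ}
    (hu : ∀ t ∈ Ioo 0 T, ∀ x, ‖u x t‖ₑ ≤ 2 * (eheatKernel n t ⋆ₗ (‖φ ·‖ₑ)) x) :
    ⨆ t : Ioo 0 T, zygNormUL n 1 β σ (u · t) < ⊤ :=
  (iSup_le fun t : Ioo 0 T =>
    zygNormUL_one_le_of_enorm_le hβα hσ t.2.1 hφ ofNat_ne_top (hu t t.2)).trans_lt
      (mul_lt_top ofNat_lt_top hnorm)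

theorem IsHeatMajorant.iSup_mul_eLpNorm_top_lt_top {p T a α β : ℝ} (hβα : β ≤ α) {φ : ℝⁿ → ℝ}
    {C : ℝ≥0∞} (hC : C ≠ ⊤)
    (hB : IsHeatMajorant p T φ fun t => C / ENNReal.ofReal (t ^ a * logFac t ^ α))
    {u : ℝⁿ → ℝ → ℝ} (hu : ∀ t ∈ Ioo 0 T, ∀ x, ‖u x t‖ₑ ≤ 2 * (eheatKernel n t ⋆ₗ (‖φ ·‖ₑ)) x) :
    ⨆ t : Ioo 0 T, ENNReal.ofReal (t.1 ^ a * logFac t.1 ^ β) * eLpNorm (u · t) ⊤ volume < ⊤ := by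
  refine (iSup_le fun ⟨t, ht⟩ => ?_).trans_lt (mul_lt_top ofNat_lt_top hC.lt_top : 2 * C < ⊤)
  calc ENNReal.ofReal (t ^ a * logFac t ^ β) * eLpNorm (u · t) ⊤ volume
      ≤ ENNReal.ofReal (t ^ a * logFac t ^ α) *
          (2 * (C / ENNReal.ofReal (t ^ a * logFac t ^ α))) := by
        have hpos : 0 ≤ t ^ a := Real.rpow_nonneg ht.1.le a
        gcongr
        · exact one_le_logFac ht.1.le
        · rw [eLpNorm_exponent_top]
          exact eLpNormEssSup_le_of_ae_enorm_bound <| .of_forall fun x =>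
            (hu t ht x).trans (mul_le_mul_right (hB.lconvolution_le t ht x) 2)
    _ ≤ 2 * C := by
        rw [mul_left_comm]
        gcongr
        exact ENNReal.mul_div_le

theorem stmt1_general {p α β : ℝ} (hn : n ≠ 0) (hp : 1 < p) (hpn : n * (p - 1) ≤ 2)
    (hα : 1 < α * (p - 1)) (hβα : β ≤ α) {φ : ℝⁿ → ℝ} (hφ : AEStronglyMeasurable φ)
    (hnorm : zygNormUL n 1 α 1 φ < ⊤) :
    ∃ T > (0 : ℝ), ∃ u : ℝⁿ → ℝ → ℝ, IsSolution n p T φ u ∧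
      (⨆ t : Ioo 0 T, zygNormUL n 1 β (T ^ ((1 : ℝ) / 2)) (u · t)) < ⊤ ∧
      (⨆ t : Ioo 0 T, ENNReal.ofReal (t.1 ^ ((n : ℝ) / 2) * logFac t.1 ^ β) *
        eLpNorm (u · t) ⊤ volume) < ⊤ := by
  obtain ⟨C, hC, T, hT, hB⟩ := exists_isHeatMajorant hn hp hpn hα hφ hnorm.ne
  obtain ⟨u, hsol, hu⟩ := hB.exists_isSolution hp hφ
  have hradius : T ^ ((1 : ℝ) / 2) ≤ 1 := Real.rpow_le_one hT.1.le hT.2 (by norm_num)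
  exact ⟨T, hT.1, u, hsol, iSup_zygNormUL_one_lt_top hβα hradius hφ hnorm hu,
    hB.iSup_mul_eLpNorm_top_lt_top hβα hC hu⟩

end HeatKernel

theorem stmt1 (n : ℕ) (hn : 1 ≤ n) (p : ℝ) (hp : p = 1 + 2 / n)
    (α : ℝ) (hα : (n : ℝ) / 2 < α) :
    ∀ φ : EuclideanSpace ℝ (Fin n) → ℝ, LocallyIntegrable φ volume →
      zygNormUL n 1 α 1 φ < ⊤ →
      ∃ T > (0 : ℝ), ∃ u : EuclideanSpace ℝ (Fin n) → ℝ → ℝ,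
        IsSolution n p T φ u ∧
        (⨆ t : Set.Ioo (0 : ℝ) T,
          zygNormUL n 1 ((n : ℝ) / 2) (T ^ ((1 : ℝ) / 2)) (fun x => u x t.1)) < ⊤ ∧
        (⨆ t : Set.Ioo (0 : ℝ) T,
          ENNReal.ofReal (t.1 ^ ((n : ℝ) / 2) * logFac t.1 ^ ((n : ℝ) / 2)) *
            eLpNorm (fun x => u x t.1) ⊤ volume) < ⊤ := by
  have hpos : (0 : ℝ) < n := by exact_mod_cast hn
  have hcritical : n * (p - 1) = 2 := by rw [hp, add_sub_cancel_left, mul_div_cancel₀ _ hpos.ne']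
  exact fun φ hφ => stmt1_general (by omega) (by nlinarith) hcritical.le (by nlinarith) hα.le
    hφ.aestronglyMeasurable
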